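/- arXiv:2212.14439 — 5 statements merged into one kernel-verified Lean document; each statement's English description precedes it below -/
import Mathlib

section
/- Let f : E_x × E_y → ℝ be (L_x, L_y)-smooth and (μ_x, μ_y)-strongly convex with 0 < μ_x ≤ L_x and 0 < μ_y ≤ L_y, and let (x*, y*) be a global minimizer of f. Set α = √(μ_x/L_x), η_x = 1/√(μ_x·L_x), η_y = (1/μ_y)·√(μ_x/L_x). Let x, x̄ ∈ E_x and y, ȳ ∈ E_y, and define x̲ = α·x + (1−α)·x̄ and y̲ = α·y + (1−α)·ȳ. Suppose ȳ' ∈ E_y satisfies ‖∇_y f(x̲, ȳ') + (η_y·α)⁻¹·(ȳ' − y̲)‖ ≤ (η_y·α)⁻¹·‖ȳ' − y̲‖, and define x̄' = x̲ − η_x·α·∇_x f(x̲, ȳ'), and x' ∈ E_x, y' ∈ E_y by the equations x' = x + α·(x̲ − x') − η_x·∇_x f(x̲, ȳ') and y' = y + α·(ȳ' − y') − η_y·∇_y f(x̲, ȳ'). Define the Lyapunov function Ψ(x, y, x̄, ȳ) = (1+α)·(η_x⁻¹·‖x − x*‖² + η_y⁻¹·‖y − y*‖²) + (2/α)·(f(x̄,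 ȳ) − f(x*, y*)). Then Ψ(x', y', x̄', ȳ') ≤ (1+α)⁻¹·Ψ(x, y, x̄, ȳ). -/
open RealInnerProductSpace

theorem bam_scalar_aux (α μx μy F Fu F' uu ww gg uw ug wg vv zz ee hh vz vh ze zh eh : ℝ)
    (ha : 0 < α) (ha1 : α ≤ 1) (hx : 0 < μx) (hy : 0 < μy)
    (hF : 0 ≤ F) (hgg : 0 ≤ gg)
    (H1 : Fu - ug - vh + μx / 2 * uu + μy / 2 * vv ≤ 0)
    (H2 : Fu - α * wg - eh + μx / 2 * (α ^ 2 * ww) + μy / 2 * ee ≤ F)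
    (hww : 0 ≤ ww) (hee : 0 ≤ ee)
    (H3 : F' ≤ Fu - α ^ 2 / (2 * μx) * gg)
    (H4 : α ^ 2 / μy * hh + 2 * ((1 - α) * eh - α * zh) ≤ 0)
    (H5 : 0 ≤ α ^ 2 * gg / μx - 2 * α * wg + μx * ww)
    (Hdd : 0 ≤ (1 - α) ^ 2 * ee - 2 * α * (1 - α) * ze + α ^ 2 * zz)
    (H6 : 0 ≤ (ee + 2 * ze + zz) * μy
      - 2 * (α * eh + α * zh) + α ^ 2 / μy * hh) :
    (μx / α * ((1 - α) ^ 2 * ww + (1 + α) ^ 2 * uu + (α / μx) ^ 2 * gg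
        + 2 * (1 - α) * (1 + α) * uw - 2 * (1 - α) * (α / μx) * wg - 2 * (1 + α) * (α / μx) * ug)
      + μy / α * (zz + (1 + α) ^ 2 * vv + (α / μy) ^ 2 * hh
        + 2 * (1 + α) * vz - 2 * (α / μy) * zh - 2 * (1 + α) * (α / μy) * vh))
      + (1 + α) * (2 / α * F')
    ≤ (1 + α) * (μx / α * (uu + 2 * (1 - α) * uw + (1 - α) ^ 2 * ww)
        + μy / α * (zz + 2 * vz + vv)) + 2 / α * F := by
  have h1 : 0 ≤ 1 - α := by linarith
  have e1 : 0 ≤ (2 * (1 + α)) * (0 - (Fu - ug - vh + μx / 2 * uu + μy / 2 * vv)) :=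
    mul_nonneg (by positivity) (by linarith)
  have e2 : 0 ≤ (2 * (1 - α) / α) * (F - (Fu - α * wg - eh + μx / 2 * (α ^ 2 * ww) + μy / 2 * ee)) :=
    mul_nonneg (by positivity) (by linarith)
  have e2' : 0 ≤ (2 * (1 - α)) * (F - (Fu - α * wg - eh)) := by
    refine mul_nonneg (by positivity) ?_
    have : 0 ≤ μx / 2 * (α ^ 2 * ww) := by positivity
    have : 0 ≤ μy / 2 * ee := by positivity
    linarith
  have e3 : 0 ≤ (2 * (1 + α) / α) * (Fu - α ^ 2 / (2 * μx) * gg - F') :=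
    mul_nonneg (by positivity) (by linarith)
  have e4 : 0 ≤ (1 / α + (1 - α)) * (0 - (α ^ 2 / μy * hh + 2 * ((1 - α) * eh - α * zh))) :=
    mul_nonneg (by positivity) (by linarith)
  have e5 : 0 ≤ (1 - α) * (α ^ 2 * gg / μx - 2 * α * wg + μx * ww) := mul_nonneg h1 H5
  have e5' : 0 ≤ α * (α ^ 2 * gg / μx) := by positivity
  have e6 : 0 ≤ (1 - α) * ((ee + 2 * ze + zz) * μy
      - 2 * (α * eh + α * zh) + α ^ 2 / μy * hh) := mul_nonneg h1 H6
  have e7 : 0 ≤ 2 * α * F := by positivity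
  have dd : 0 ≤ μy / α * ((1 - α) ^ 2 * ee - 2 * α * (1 - α) * ze + α ^ 2 * zz) :=
    mul_nonneg (by positivity) Hdd
  rw [← sub_nonneg]
  refine le_of_le_of_eq (add_nonneg (add_nonneg (add_nonneg (add_nonneg (add_nonneg (add_nonneg
    (add_nonneg (add_nonneg (add_nonneg e1 e2) e2') e3) e4) e5) e5') e6) e7) dd) ?_
  field_simp
  ring

theorem bam_one_step_lyapunov_contraction
    {Ex Ey : Type*} [NormedAddCommGroup Ex] [InnerProductSpace ℝ Ex]
    [NormedAddCommGroup Ey] [InnerProductSpace ℝ Ey]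
    (f : Ex → Ey → ℝ) (gx : Ex → Ey → Ex) (gy : Ex → Ey → Ey)
    (Lx Ly μx μy : ℝ) (hμx : 0 < μx) (hμy : 0 < μy) (hμLx : μx ≤ Lx) (hμLy : μy ≤ Ly)
    (hsmooth : ∀ x₁ x₂ : Ex, ∀ y₁ y₂ : Ey,
      f x₂ y₂ ≤ f x₁ y₁ + ⟪gx x₁ y₁, x₂ - x₁⟫ + ⟪gy x₁ y₁, y₂ - y₁⟫
        + Lx / 2 * ‖x₂ - x₁‖ ^ 2 + Ly / 2 * ‖y₂ - y₁‖ ^ 2)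
    (hsc : ∀ x₁ x₂ : Ex, ∀ y₁ y₂ : Ey,
      f x₂ y₂ ≥ f x₁ y₁ + ⟪gx x₁ y₁, x₂ - x₁⟫ + ⟪gy x₁ y₁, y₂ - y₁⟫
        + μx / 2 * ‖x₂ - x₁‖ ^ 2 + μy / 2 * ‖y₂ - y₁‖ ^ 2)
    (xs : Ex) (ys : Ey) (hmin : ∀ x y, f xs ys ≤ f x y)
    (α ηx ηy : ℝ)
    (hα : α = Real.sqrt (μx / Lx))
    (hηx : ηx = 1 / Real.sqrt (μx * Lx))
    (hηy : ηy = (1 / μy) * Real.sqrt (μx / Lx))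
    (x xb : Ex) (y yb : Ey) (xu : Ex) (yu : Ey)
    (hxu : xu = α • x + (1 - α) • xb)
    (hyu : yu = α • y + (1 - α) • yb)
    (yb' : Ey)
    (hyb' : ‖gy xu yb' + (ηy * α)⁻¹ • (yb' - yu)‖ ≤ (ηy * α)⁻¹ * ‖yb' - yu‖)
    (xb' : Ex) (hxb' : xb' = xu - (ηx * α) • gx xu yb')
    (x' : Ex) (y' : Ey)
    (hx' : x' = x + α • (xu - x') - ηx • gx xu yb')
    (hy' : y' = y + α • (yb' - y') - ηy • gy xu yb')
    (Ψ : Ex → Ey → Ex → Ey → ℝ)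
    (hΨ : ∀ a c b d, Ψ a c b d =
      (1 + α) * (ηx⁻¹ * ‖a - xs‖ ^ 2 + ηy⁻¹ * ‖c - ys‖ ^ 2)
        + (2 / α) * (f b d - f xs ys)) :
    Ψ x' y' xb' yb' ≤ (1 + α)⁻¹ * Ψ x y xb yb := by
  have hLx : 0 < Lx := lt_of_lt_of_le hμx hμLx
  have ha : 0 < α := by rw [hα]; positivity
  have ha1 : α ≤ 1 := by
    rw [hα, Real.sqrt_le_one]
    exact (div_le_one hLx).2 hμLx
  have ha2 : α ^ 2 = μx / Lx := by rw [hα]; exact Real.sq_sqrt (by positivity)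
  have hL : Lx = μx / α ^ 2 := by rw [ha2]; field_simp
  have hηx2 : ηx = α / μx := by
    have h : μx * Lx = (μx / α) ^ 2 := by rw [hL]; field_simp
    rw [hηx, h, Real.sqrt_sq (by positivity)]; field_simp
  have hηy2 : ηy = α / μy := by rw [hηy, ← hα]; field_simp
  clear hα hηx hηy
  subst hηx2 hηy2
  generalize hg : gx xu yb' = g at *
  generalize hh : gy xu yb' = h at *
  obtain ⟨w, hw⟩ : ∃ w, w = x - xb := ⟨_, rfl⟩
  obtain ⟨u, hu⟩ : ∃ u, u = xu - xs := ⟨_, rfl⟩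
  obtain ⟨v, hv⟩ : ∃ v, v = yb' - ys := ⟨_, rfl⟩
  obtain ⟨z, hz⟩ : ∃ z, z = y - yb' := ⟨_, rfl⟩
  obtain ⟨e, he⟩ : ∃ e, e = yb' - yb := ⟨_, rfl⟩
  have x1 : x - xs = u + (1 - α) • w := by rw [hu, hw, hxu]; module
  have y1 : y - ys = z + v := by rw [hz, hv]; abel
  have x2 : (1 + α) • (x' - xs) = (1 - α) • w + (1 + α) • u - (α / μx) • g := by
    have : (1 + α) • x' = x + α • xu - (α / μx) • g := by
      calc (1 + α) • x' = x' + α • x' := by module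
        _ = (x + α • (xu - x') - (α / μx) • g) + α • x' := by rw [← hx']
        _ = _ := by module
    rw [smul_sub, this, hu, hw, hxu]; module
  have y2 : (1 + α) • (y' - ys) = z + (1 + α) • v - (α / μy) • h := by
    have : (1 + α) • y' = y + α • yb' - (α / μy) • h := by
      calc (1 + α) • y' = y' + α • y' := by module
        _ = (y + α • (yb' - y') - (α / μy) • h) + α • y' := by rw [← hy']
        _ = _ := by module
    rw [smul_sub, this, hz, hv]; module
  have d1 : yb' - yu = (1 - α) • e - α • z := by rw [he, hz, hyu]; module
  have nx1 : ‖x - xs‖ ^ 2 = ⟪u, u⟫ + 2 * (1 - α) * ⟪u, w⟫ + (1 - α) ^ 2 * ⟪w, w⟫ := by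
    rw [x1, ← real_inner_self_eq_norm_sq]
    simp only [inner_add_left, inner_add_right, inner_smul_left, inner_smul_right,
      real_inner_comm u w, conj_trivial]
    ring
  have ny1 : ‖y - ys‖ ^ 2 = ⟪z, z⟫ + 2 * ⟪v, z⟫ + ⟪v, v⟫ := by
    rw [y1, ← real_inner_self_eq_norm_sq]
    simp only [inner_add_left, inner_add_right, real_inner_comm v z]
    ring
  have nx2 : (1 + α) ^ 2 * ‖x' - xs‖ ^ 2 = (1 - α) ^ 2 * ⟪w, w⟫ + (1 + α) ^ 2 * ⟪u, u⟫
        + (α / μx) ^ 2 * ⟪g, g⟫ + 2 * (1 - α) * (1 + α) * ⟪u, w⟫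
        - 2 * (1 - α) * (α / μx) * ⟪w, g⟫ - 2 * (1 + α) * (α / μx) * ⟪u, g⟫ := by
    have : (1 + α) ^ 2 * ‖x' - xs‖ ^ 2 = ‖(1 + α) • (x' - xs)‖ ^ 2 := by
      rw [norm_smul, mul_pow, Real.norm_eq_abs, sq_abs]
    rw [this, x2, ← real_inner_self_eq_norm_sq]
    simp only [inner_add_left, inner_add_right, inner_sub_left, inner_sub_right, inner_smul_left,
      inner_smul_right, real_inner_comm u w, real_inner_comm w g, real_inner_comm u g, conj_trivial]
    ring
  have ny2 : (1 + α) ^ 2 * ‖y' - ys‖ ^ 2 = ⟪z, z⟫ + (1 + α) ^ 2 * ⟪v, v⟫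
        + (α / μy) ^ 2 * ⟪h, h⟫ + 2 * (1 + α) * ⟪v, z⟫
        - 2 * (α / μy) * ⟪z, h⟫ - 2 * (1 + α) * (α / μy) * ⟪v, h⟫ := by
    have : (1 + α) ^ 2 * ‖y' - ys‖ ^ 2 = ‖(1 + α) • (y' - ys)‖ ^ 2 := by
      rw [norm_smul, mul_pow, Real.norm_eq_abs, sq_abs]
    rw [this, y2, ← real_inner_self_eq_norm_sq]
    simp only [inner_add_left, inner_add_right, inner_sub_left, inner_sub_right, inner_smul_left,
      inner_smul_right, real_inner_comm v z, real_inner_comm z h, real_inner_comm v h, conj_trivial]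
    ring
  have H1 := hsc xu xs yb' ys
  have H2 := hsc xu xb yb' yb
  have H3 := hsmooth xu xb' yb' yb'
  rw [hg, hh] at H1 H2 H3
  rw [show xs - xu = -u by rw [hu]; abel, show ys - yb' = -v by rw [hv]; abel,
    inner_neg_right, inner_neg_right, norm_neg, norm_neg, ← real_inner_self_eq_norm_sq,
    ← real_inner_self_eq_norm_sq, real_inner_comm u g, real_inner_comm v h] at H1
  rw [show xb - xu = -(α • w) by rw [hw, hxu]; module, show yb - yb' = -e by rw [he]; abel,
    inner_neg_right, inner_neg_right, norm_neg, norm_neg, ← real_inner_self_eq_norm_sq,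
    ← real_inner_self_eq_norm_sq, inner_smul_right, inner_smul_left, inner_smul_right, conj_trivial,
    real_inner_comm w g, real_inner_comm e h] at H2
  rw [show xb' - xu = -((α / μx * α) • g) by rw [hxb']; abel, sub_self, inner_zero_right,
    inner_neg_right, norm_neg, norm_zero, ← real_inner_self_eq_norm_sq,
    inner_smul_right, inner_smul_left, inner_smul_right, conj_trivial, hL] at H3
  have hc : (α / μy * α)⁻¹ = μy / α ^ 2 := by field_simp
  have H4 : α ^ 2 / μy * ⟪h, h⟫ + 2 * ((1 - α) * ⟪e, h⟫ - α * ⟪z, h⟫) ≤ 0 := by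
    rw [hc] at hyb'
    have h2 := pow_le_pow_left₀ (norm_nonneg _) hyb' 2
    rw [mul_pow, d1, ← real_inner_self_eq_norm_sq, ← real_inner_self_eq_norm_sq] at h2
    have h3 : ⟪h + (μy / α ^ 2) • ((1 - α) • e - α • z), h + (μy / α ^ 2) • ((1 - α) • e - α • z)⟫
        = ⟪h, h⟫ + 2 * (μy / α ^ 2) * ((1 - α) * ⟪e, h⟫ - α * ⟪z, h⟫)
          + (μy / α ^ 2) ^ 2 * ⟪(1 - α) • e - α • z, (1 - α) • e - α • z⟫ := by
      simp only [inner_add_left, inner_add_right, inner_sub_left, inner_sub_right, inner_smul_left,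
        inner_smul_right, real_inner_comm e h, real_inner_comm z h, conj_trivial]
      ring
    rw [h3] at h2
    have h4 : ⟪h, h⟫ + 2 * (μy / α ^ 2) * ((1 - α) * ⟪e, h⟫ - α * ⟪z, h⟫) ≤ 0 := by linarith
    have h5 : α ^ 2 / μy * ⟪h, h⟫ + 2 * ((1 - α) * ⟪e, h⟫ - α * ⟪z, h⟫)
        = α ^ 2 / μy * (⟪h, h⟫ + 2 * (μy / α ^ 2) * ((1 - α) * ⟪e, h⟫ - α * ⟪z, h⟫)) := by
      field_simp
    rw [h5]
    exact mul_nonpos_of_nonneg_of_nonpos (by positivity) h4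
  have H5 : 0 ≤ α ^ 2 * ⟪g, g⟫ / μx - 2 * α * ⟪w, g⟫ + μx * ⟪w, w⟫ := by
    have h1 : 0 ≤ μx * ⟪(α / μx) • g - w, (α / μx) • g - w⟫ :=
      mul_nonneg hμx.le real_inner_self_nonneg
    refine le_of_le_of_eq h1 ?_
    simp only [inner_sub_left, inner_sub_right, inner_smul_left,
      inner_smul_right, real_inner_comm w g, conj_trivial]
    field_simp
    ring
  have H6 : 0 ≤ (⟪e, e⟫ + 2 * ⟪z, e⟫ + ⟪z, z⟫) * μy
      - 2 * (α * ⟪e, h⟫ + α * ⟪z, h⟫) + α ^ 2 / μy * ⟪h, h⟫ := by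
    have h1 : 0 ≤ μy * ⟪e + z - (α / μy) • h, e + z - (α / μy) • h⟫ :=
      mul_nonneg hμy.le real_inner_self_nonneg
    refine le_of_le_of_eq h1 ?_
    simp only [inner_add_left, inner_add_right, inner_sub_left, inner_sub_right, inner_smul_left,
      inner_smul_right, real_inner_comm e h, real_inner_comm z h, real_inner_comm z e, conj_trivial]
    field_simp
    ring
  have Hdd : 0 ≤ (1 - α) ^ 2 * ⟪e, e⟫ - 2 * α * (1 - α) * ⟪z, e⟫ + α ^ 2 * ⟪z, z⟫ := by
    have h1 : 0 ≤ ⟪(1 - α) • e - α • z, (1 - α) • e - α • z⟫ := real_inner_self_nonneg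
    refine le_of_le_of_eq h1 ?_
    simp only [inner_sub_left, inner_sub_right, inner_smul_left,
      inner_smul_right, real_inner_comm z e, conj_trivial]
    ring
  have H3' : f xb' yb' - f xs ys ≤ (f xu yb' - f xs ys) - α ^ 2 / (2 * μx) * ⟪g, g⟫ := by
    have : -(α / μx * α * ⟪g, g⟫) + μx / α ^ 2 / 2 * (α / μx * α * (α / μx * α * ⟪g, g⟫))
        = - (α ^ 2 / (2 * μx) * ⟪g, g⟫) := by
      field_simp
      ring
    linarith
  have key := bam_scalar_aux α μx μy (f xb yb - f xs ys) (f xu yb' - f xs ys) (f xb' yb' - f xs ys)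
    ⟪u, u⟫ ⟪w, w⟫ ⟪g, g⟫ ⟪u, w⟫ ⟪u, g⟫ ⟪w, g⟫ ⟪v, v⟫ ⟪z, z⟫ ⟪e, e⟫ ⟪h, h⟫ ⟪v, z⟫ ⟪v, h⟫ ⟪z, e⟫
    ⟪z, h⟫ ⟪e, h⟫ ha ha1 hμx hμy (sub_nonneg.2 (hmin _ _)) real_inner_self_nonneg
    (by linarith) (by linarith) real_inner_self_nonneg real_inner_self_nonneg H3' H4 H5 Hdd H6
  rw [← nx2, ← ny2, ← nx1, ← ny1] at key
  rw [hΨ, hΨ, inv_div, inv_div, ← div_eq_inv_mul (_ + _) (1 + α), le_div_iff₀ (by positivity)]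
  linarith
end

section
/- Let f : E_x × E_y → ℝ be (L_x, L_y)-smooth and (μ_x, μ_y)-strongly convex with 0 < μ_x ≤ L_x and 0 < μ_y ≤ L_y, and let (x*, y*) be a global minimizer of f. Set α = √(μ_x/L_x), η_x = 1/√(μ_x·L_x), η_y = (1/μ_y)·√(μ_x/L_x). Let (x^k)_{k=0}^{K}, (x̄^k)_{k=0}^{K} be sequences in E_x and (y^k)_{k=0}^{K}, (ȳ^k)_{k=0}^{K} sequences in E_y with x^0 = x̄^0 and y^0 = ȳ^0, such that for every k < K, setting x̲^k = α·x^k + (1−α)·x̄^k and y̲^k = α·y^k + (1−α)·ȳ^k, the iterates satisfy ‖∇_y f(x̲^k, ȳ^{k+1}) + (η_y·α)⁻¹·(ȳ^{k+1} − y̲^k)‖ ≤ (η_y·α)⁻¹·‖ȳ^{k+1} − y̲^k‖, x̄^{k+1} = x̲^k − η_x·α·∇_x f(x̲^k, ȳ^{k+1}), x^{k+1} = x^k + α·(x̲^k − x^{k+1}) − η_x·∇_x f(x̲^k, ȳ^{k+1}), and y^{k+1} = y^k + α·(ȳ^{k+1} − y^{k+1}) − η_y·∇_y f(x̲^k, ȳ^{k+1}).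 Define Ψ^k = (1+α)·(η_x⁻¹·‖x^k − x*‖² + η_y⁻¹·‖y^k − y*‖²) + (2/α)·(f(x̄^k, ȳ^k) − f(x*, y*)). Then Ψ^K ≤ (1+α)^{−K}·Ψ^0, and consequently f(x̄^K, ȳ^K) − f(x*, y*) ≤ (α/2)·(1+α)^{−K}·Ψ^0. -/
open RealInnerProductSpace

lemma bam_x {E : Type*} [NormedAddCommGroup E] [InnerProductSpace ℝ E]
    (a m : ℝ) (ha : 0 < a) (ha1 : a ≤ 1) (hm : 0 < m) (B W g : E) :
    (m / a) * ‖(1 + a) • B + (1 - a) • W - (a / m) • g‖ ^ 2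
      - (1 + a) * ((m / a) * ‖B + (1 - a) • W‖ ^ 2)
      ≤ 2 * (1 + a) * (-⟪g, B⟫ + m / 2 * ‖B‖ ^ 2)
        + 2 * (1 - a ^ 2) / a * (-(a * ⟪g, W⟫) + m / 2 * (a ^ 2 * ‖W‖ ^ 2))
        + (1 + a) * (a / m) * ‖g‖ ^ 2 := by
  have h1 : 0 ≤ ((1 - a) / m) * ‖m • W - a • g‖ ^ 2 :=
    mul_nonneg (div_nonneg (by linarith) hm.le) (by positivity)
  have h2 : 0 ≤ m * (1 - a) * a ^ 2 * ‖W‖ ^ 2 :=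
    mul_nonneg (mul_nonneg (mul_nonneg hm.le (by linarith)) (by positivity)) (by positivity)
  have h3 : 0 ≤ a ^ 3 / m * ‖g‖ ^ 2 := by positivity
  rw [← sub_nonneg]
  refine le_of_le_of_eq (add_nonneg (add_nonneg h1 h2) h3) ?_
  simp only [← real_inner_self_eq_norm_sq, inner_add_left, inner_add_right, inner_sub_left,
    inner_sub_right, real_inner_smul_left, real_inner_smul_right]
  rw [real_inner_comm B W, real_inner_comm B g, real_inner_comm W g]
  field_simp
  ring

lemma bam_y {E : Type*} [NormedAddCommGroup E] [InnerProductSpace ℝ E]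
    (a m : ℝ) (ha : 0 < a) (ha1 : a ≤ 1) (hm : 0 < m) (B P Q h : E)
    (hin : 0 ≤ 2 * a * ⟪h, P⟫ + 2 * (1 - a) * ⟪h, Q⟫ - a ^ 2 / m * ‖h‖ ^ 2) :
    (m / a) * ‖(1 + a) • B + P - (a / m) • h‖ ^ 2
      - (1 + a) * ((m / a) * ‖B + P‖ ^ 2)
      ≤ 2 * (1 + a) * (-⟪h, B⟫ + m / 2 * ‖B‖ ^ 2)
        + 2 * (1 - a ^ 2) / a * (⟪h, Q⟫ + m / 2 * ‖Q‖ ^ 2) := by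
  have h1 : 0 ≤ (1 / m) * ‖m • P - a • h‖ ^ 2 := by positivity
  have h2 : 0 ≤ (1 - a ^ 2) / a * m * ‖Q‖ ^ 2 :=
    mul_nonneg (mul_nonneg (div_nonneg (by nlinarith) ha.le) hm.le) (by positivity)
  have h3 := mul_nonneg (show 0 ≤ (1 + a) / a by positivity) hin
  rw [← sub_nonneg]
  refine le_of_le_of_eq (add_nonneg (add_nonneg h1 h2) h3) ?_
  simp only [← real_inner_self_eq_norm_sq, inner_add_left, inner_add_right, inner_sub_left,
    inner_sub_right, real_inner_smul_left, real_inner_smul_right]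
  rw [real_inner_comm B P, real_inner_comm B h, real_inner_comm P h]
  field_simp
  ring

theorem bam_linear_convergence
    {Ex Ey : Type*} [NormedAddCommGroup Ex] [InnerProductSpace ℝ Ex]
    [NormedAddCommGroup Ey] [InnerProductSpace ℝ Ey]
    (f : Ex → Ey → ℝ) (gx : Ex → Ey → Ex) (gy : Ex → Ey → Ey)
    (Lx Ly μx μy : ℝ) (hμx : 0 < μx) (hμy : 0 < μy) (hμLx : μx ≤ Lx) (hμLy : μy ≤ Ly)
    (hsmooth : ∀ x₁ x₂ : Ex, ∀ y₁ y₂ : Ey,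
      f x₂ y₂ ≤ f x₁ y₁ + ⟪gx x₁ y₁, x₂ - x₁⟫ + ⟪gy x₁ y₁, y₂ - y₁⟫
        + Lx / 2 * ‖x₂ - x₁‖ ^ 2 + Ly / 2 * ‖y₂ - y₁‖ ^ 2)
    (hsc : ∀ x₁ x₂ : Ex, ∀ y₁ y₂ : Ey,
      f x₂ y₂ ≥ f x₁ y₁ + ⟪gx x₁ y₁, x₂ - x₁⟫ + ⟪gy x₁ y₁, y₂ - y₁⟫
        + μx / 2 * ‖x₂ - x₁‖ ^ 2 + μy / 2 * ‖y₂ - y₁‖ ^ 2)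
    (xs : Ex) (ys : Ey) (hmin : ∀ x y, f xs ys ≤ f x y)
    (α ηx ηy : ℝ)
    (hα : α = Real.sqrt (μx / Lx))
    (hηx : ηx = 1 / Real.sqrt (μx * Lx))
    (hηy : ηy = (1 / μy) * Real.sqrt (μx / Lx))
    (K : ℕ)
    (x xb : ℕ → Ex) (y yb : ℕ → Ey)
    (xu : ℕ → Ex) (yu : ℕ → Ey)
    (hx0 : x 0 = xb 0) (hy0 : y 0 = yb 0)
    (hxu : ∀ k < K, xu k = α • x k + (1 - α) • xb k)
    (hyu : ∀ k < K, yu k = α • y k + (1 - α) • yb k)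
    (hinner : ∀ k < K,
      ‖gy (xu k) (yb (k + 1)) + (ηy * α)⁻¹ • (yb (k + 1) - yu k)‖
        ≤ (ηy * α)⁻¹ * ‖yb (k + 1) - yu k‖)
    (hxb : ∀ k < K, xb (k + 1) = xu k - (ηx * α) • gx (xu k) (yb (k + 1)))
    (hx : ∀ k < K, x (k + 1) = x k + α • (xu k - x (k + 1)) - ηx • gx (xu k) (yb (k + 1)))
    (hy : ∀ k < K, y (k + 1) = y k + α • (yb (k + 1) - y (k + 1)) - ηy • gy (xu k) (yb (k + 1)))
    (Ψ : ℕ → ℝ)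
    (hΨ : ∀ k, Ψ k =
      (1 + α) * (ηx⁻¹ * ‖x k - xs‖ ^ 2 + ηy⁻¹ * ‖y k - ys‖ ^ 2)
        + (2 / α) * (f (xb k) (yb k) - f xs ys)) :
    Ψ K ≤ ((1 + α) ^ K)⁻¹ * Ψ 0 ∧
      f (xb K) (yb K) - f xs ys ≤ (α / 2) * ((1 + α) ^ K)⁻¹ * Ψ 0 := by
  have hLx : 0 < Lx := lt_of_lt_of_le hμx hμLx
  have ha : 0 < α := by rw [hα]; positivity
  have ha1 : α ≤ 1 := by
    rw [hα]; exact Real.sqrt_le_one.mpr ((div_le_one hLx).mpr hμLx)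
  have hasq : α ^ 2 = μx / Lx := by rw [hα]; exact Real.sq_sqrt (by positivity)
  have hμ : μx = α ^ 2 * Lx := by rw [hasq]; field_simp
  have hs : Real.sqrt (μx * Lx) = α * Lx := by
    rw [hμ, show α ^ 2 * Lx * Lx = (α * Lx) ^ 2 by ring]
    exact Real.sqrt_sq (by positivity)
  have hηx2 : ηx = α / μx := by rw [hηx, hs, hμ]; field_simp
  have hηy2 : ηy = α / μy := by rw [hηy, ← hα]; ring
  have hLx2 : Lx = μx / α ^ 2 := by rw [hμ]; field_simp
  clear hα hηx hηy hs hμ hasq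
  have step : ∀ k < K, (1 + α) * Ψ (k + 1) ≤ Ψ k := by
    intro k hk
    have hxu := hxu k hk
    have hyu := hyu k hk
    have hinner := hinner k hk
    have hxb := hxb k hk
    have hx := hx k hk
    have hy := hy k hk
    rw [hΨ, hΨ]
    have S1 := hsc (xu k) xs (yb (k + 1)) ys
    have S2 := hsc (xu k) (xb k) (yb (k + 1)) (yb k)
    have SM := hsmooth (xu k) (xb (k + 1)) (yb (k + 1)) (yb (k + 1))
    have hF := hmin (xb k) (yb k)
    generalize hg : gx (xu k) (yb (k + 1)) = g at *
    generalize hh : gy (xu k) (yb (k + 1)) = h at *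
    generalize f (xu k) (yb (k + 1)) = f0 at *
    generalize f (xb (k + 1)) (yb (k + 1)) = Fn at *
    generalize f (xb k) (yb k) = F at *
    generalize f xs ys = Fs at *
    have hane : α ≠ 0 := ha.ne'
    have eB : xs - xu k = -(xu k - xs) := by abel
    have eW : xb k - xu k = -(α • (α⁻¹ • (xu k - xb k))) := by
      rw [smul_inv_smul₀ hane]; abel
    have eA : x k - xs = (xu k - xs) + (1 - α) • (α⁻¹ • (xu k - xb k)) := by
      rw [hxu]; match_scalars <;> field_simp <;> ring
    have eD : (1 + α) • (x (k + 1) - xs)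
        = (1 + α) • (xu k - xs) + (1 - α) • (α⁻¹ • (xu k - xb k)) - (α / μx) • g := by
      have e1 : (1 + α) • x (k + 1) = x k + α • xu k - ηx • g := by
        have : (1 + α) • x (k + 1) = x (k + 1) + α • x (k + 1) := by module
        rw [this]; nth_rewrite 1 [hx]; module
      rw [smul_sub, e1, hηx2, hxu]; match_scalars <;> field_simp <;> ring
    have eG : xb (k + 1) - xu k = -((α ^ 2 / μx) • g) := by
      rw [hxb, hηx2]; match_scalars <;> field_simp <;> ring
    have LX := bam_x α μx ha ha1 hμx (xu k - xs) (α⁻¹ • (xu k - xb k)) g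
    rw [← eD, ← eA] at LX
    rw [eB] at S1
    rw [eW] at S2
    generalize α⁻¹ • (xu k - xb k) = W at *
    have fB : ys - yb (k + 1) = -(yb (k + 1) - ys) := by abel
    have fA : y k - ys = (yb (k + 1) - ys) + (y k - yb (k + 1)) := by abel
    have fD : (1 + α) • (y (k + 1) - ys)
        = (1 + α) • (yb (k + 1) - ys) + (y k - yb (k + 1)) - (α / μy) • h := by
      have e1 : (1 + α) • y (k + 1) = y k + α • yb (k + 1) - ηy • h := by
        have : (1 + α) • y (k + 1) = y (k + 1) + α • y (k + 1) := by module
        rw [this]; nth_rewrite 1 [hy]; module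
      rw [smul_sub, e1, hηy2]; module
    have hin : 0 ≤ 2 * α * ⟪h, y k - yb (k + 1)⟫ + 2 * (1 - α) * ⟪h, yb k - yb (k + 1)⟫
        - α ^ 2 / μy * ‖h‖ ^ 2 := by
      have e : yb (k + 1) - yu k
          = -(α • (y k - yb (k + 1)) + (1 - α) • (yb k - yb (k + 1))) := by
        rw [hyu]; module
      have e2 : ⟪h, yb (k + 1) - yu k⟫
          = -(α * ⟪h, y k - yb (k + 1)⟫ + (1 - α) * ⟪h, yb k - yb (k + 1)⟫) := by
        rw [e, inner_neg_right, inner_add_right, real_inner_smul_right, real_inner_smul_right]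
      have hc : (ηy * α)⁻¹ = μy / α ^ 2 := by rw [hηy2]; field_simp
      rw [hc] at hinner
      have hsq := pow_le_pow_left₀ (norm_nonneg _) hinner 2
      rw [norm_add_sq_real, norm_smul, real_inner_smul_right, e2, Real.norm_eq_abs,
        abs_of_pos (by positivity : 0 < μy / α ^ 2)] at hsq
      have h5 : ‖h‖ ^ 2 ≤ μy / α ^ 2 *
          (2 * α * ⟪h, y k - yb (k + 1)⟫ + 2 * (1 - α) * ⟪h, yb k - yb (k + 1)⟫) := by
        linarith
      have h6 := mul_le_mul_of_nonneg_left h5 (show 0 ≤ α ^ 2 / μy by positivity)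
      have h7 : α ^ 2 / μy * (μy / α ^ 2 *
          (2 * α * ⟪h, y k - yb (k + 1)⟫ + 2 * (1 - α) * ⟪h, yb k - yb (k + 1)⟫))
          = 2 * α * ⟪h, y k - yb (k + 1)⟫ + 2 * (1 - α) * ⟪h, yb k - yb (k + 1)⟫ := by
        field_simp
      linarith
    have LY := bam_y α μy ha ha1 hμy (yb (k + 1) - ys) (y k - yb (k + 1)) (yb k - yb (k + 1)) h hin
    rw [← fD, ← fA] at LY
    rw [fB] at S1
    have e0 : |1 + α| = 1 + α := abs_of_pos (by linarith)
    rw [norm_smul, Real.norm_eq_abs, e0] at LX LY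
    rw [inner_neg_right, inner_neg_right, norm_neg, norm_neg] at S1
    rw [inner_neg_right, norm_neg, real_inner_smul_right, norm_smul, Real.norm_eq_abs,
      abs_of_pos ha] at S2
    rw [eG, inner_neg_right, norm_neg, real_inner_smul_right, norm_smul, Real.norm_eq_abs,
      abs_of_pos (by positivity : 0 < α ^ 2 / μx), real_inner_self_eq_norm_sq, sub_self,
      inner_zero_right, norm_zero, hLx2] at SM
    have SMn : Fn ≤ f0 - α ^ 2 / (2 * μx) * ‖g‖ ^ 2 := by
      refine SM.trans (le_of_eq ?_)
      field_simp
      ring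
    have T1 := mul_le_mul_of_nonneg_left S1 (show 0 ≤ 2 * (1 + α) by positivity)
    have T2 := mul_le_mul_of_nonneg_left S2 (show 0 ≤ 2 * (1 - α ^ 2) / α from
      div_nonneg (by nlinarith) ha.le)
    have T3 := mul_le_mul_of_nonneg_left SMn (show 0 ≤ 2 / α * (1 + α) by positivity)
    have T4 := mul_le_mul_of_nonneg_left hF (show 0 ≤ 2 * α by positivity)
    rw [hηx2, hηy2, inv_div, inv_div]
    have I1 : 2 / α * (1 + α) * (f0 - α ^ 2 / (2 * μx) * ‖g‖ ^ 2)
        = 2 / α * (1 + α) * f0 - (1 + α) * (α / μx) * ‖g‖ ^ 2 := by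
      field_simp
    have I2 : 2 * (1 - α ^ 2) / α * F = 2 / α * F - 2 * α * F := by field_simp
    have I3 : 2 * (1 - α ^ 2) / α * f0 = 2 / α * f0 - 2 * α * f0 := by field_simp
    have I4 : 2 / α * (1 + α) * f0 = 2 / α * f0 + 2 * f0 := by field_simp
    have I5 : 2 / α * (1 + α) * Fs = 2 / α * Fs + 2 * Fs := by field_simp
    rw [I1] at T3
    linarith
  have hpow : ∀ k ≤ K, Ψ k ≤ ((1 + α) ^ k)⁻¹ * Ψ 0 := by
    intro k
    induction k with
    | zero => intro _; simp
    | succ n ih =>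
      intro hn
      have h1 := ih (by omega)
      have h2 := step n (by omega)
      have h3 : Ψ (n + 1) ≤ (1 + α)⁻¹ * Ψ n := by
        rw [inv_mul_eq_div, le_div_iff₀ (by positivity)]; linarith
      calc Ψ (n + 1) ≤ (1 + α)⁻¹ * Ψ n := h3
        _ ≤ (1 + α)⁻¹ * (((1 + α) ^ n)⁻¹ * Ψ 0) := by gcongr
        _ = _ := by rw [pow_succ, mul_inv]; ring
  have hK := hpow K le_rfl
  refine ⟨hK, ?_⟩
  have h1 : (2 / α) * (f (xb K) (yb K) - f xs ys) ≤ Ψ K := by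
    rw [hΨ K, hηx2, hηy2]
    have : 0 ≤ (1 + α) * ((α / μx)⁻¹ * ‖x K - xs‖ ^ 2 + (α / μy)⁻¹ * ‖y K - ys‖ ^ 2) := by
      positivity
    linarith
  calc f (xb K) (yb K) - f xs ys = (α / 2) * ((2 / α) * (f (xb K) (yb K) - f xs ys)) := by
        field_simp
    _ ≤ (α / 2) * (((1 + α) ^ K)⁻¹ * Ψ 0) := by
        exact mul_le_mul_of_nonneg_left (h1.trans hK) (by positivity)
    _ = _ := by ring
end

section
/- Let E be a real inner product space, let α, η > 0, and let u, u', v, u*, g ∈ E satisfy the implicit update equation u' = u + α·(v − u') − η·g. Then (1+α)·‖u' − u*‖² ≤ ‖u − u*‖² − ‖u' − u‖² + α·‖v − u*‖² − 2η·⟨g, u' − u*⟩. -/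
open RealInnerProductSpace

theorem implicit_update_distance_inequality
    {E : Type*} [NormedAddCommGroup E] [InnerProductSpace ℝ E]
    (α η : ℝ) (hα : 0 < α) (hη : 0 < η)
    (u u' v ustar g : E)
    (h : u' = u + α • (v - u') - η • g) :
    (1 + α) * ‖u' - ustar‖ ^ 2
      ≤ ‖u - ustar‖ ^ 2 - ‖u' - u‖ ^ 2 + α * ‖v - ustar‖ ^ 2
        - 2 * η * ⟪g, u' - ustar⟫ := by
  have hd : u' - u = α • (v - u') - η • g := by
    calc u' - u = (u + α • (v - u') - η • g) - u := by rw [← h]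
      _ = α • (v - u') - η • g := by abel
  have h1 : ‖u - ustar‖ ^ 2
      = ‖u' - ustar‖ ^ 2 - 2 * ⟪u' - ustar, u' - u⟫ + ‖u' - u‖ ^ 2 := by
    rw [← norm_sub_sq_real]
    congr 2
    abel
  have h2 : ‖v - ustar‖ ^ 2
      = ‖u' - ustar‖ ^ 2 + 2 * ⟪u' - ustar, v - u'⟫ + ‖v - u'‖ ^ 2 := by
    rw [← norm_add_sq_real]
    congr 2
    abel
  have h3 : ⟪u' - ustar, u' - u⟫
      = α * ⟪u' - ustar, v - u'⟫ - η * ⟪g, u' - ustar⟫ := by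
    rw [hd, inner_sub_right, real_inner_smul_right, real_inner_smul_right,
      real_inner_comm g]
  have h4 : 0 ≤ α * ‖v - u'‖ ^ 2 := by positivity
  rw [h1, h2, h3]
  linarith
end

section
/- Let f : E_x × E_y → ℝ be (L_x, L_y)-smooth and (μ_x, μ_y)-strongly convex with 0 < μ_x ≤ L_x and 0 < μ_y ≤ L_y, and let (x*, y*) be a global minimizer of f. Set α = √(μ_x/L_x), η_x = 1/√(μ_x·L_x), η_y = (1/μ_y)·√(μ_x/L_x). Let the sequences (x^k, y^k, x̄^k, ȳ^k)_{k=0}^{K} satisfy the BAM recurrences: x^0 = x̄^0, y^0 = ȳ^0, and for every k < K, with x̲^k = α·x^k + (1−α)·x̄^k and y̲^k = α·y^k + (1−α)·ȳ^k: ‖∇_y f(x̲^k, ȳ^{k+1}) + (η_y·α)⁻¹·(ȳ^{k+1} − y̲^k)‖ ≤ (η_y·α)⁻¹·‖ȳ^{k+1} − y̲^k‖, x̄^{k+1} = x̲^k − η_x·α·∇_x f(x̲^k, ȳ^{k+1}), x^{k+1} = x^k + α·(x̲^k − x^{k+1}) − η_x·∇_x f(x̲^k, ȳ^{k+1}), y^{k+1}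 = y^k + α·(ȳ^{k+1} − y^{k+1}) − η_y·∇_y f(x̲^k, ȳ^{k+1}). Define Ψ^0 = (1+α)·(η_x⁻¹·‖x^0 − x*‖² + η_y⁻¹·‖y^0 − y*‖²) + (2/α)·(f(x̄^0, ȳ^0) − f(x*, y*)). Then for any ε > 0, if K ≥ 2·√(L_x/μ_x)·log(max{1, α·Ψ^0/(2ε)}), then f(x̄^K, ȳ^K) − f(x*, y*) ≤ ε. -/
open RealInnerProductSpace

lemma bam_aux {E : Type*} [NormedAddCommGroup E] [InnerProductSpace ℝ E]
    (x xp z g s : E) (α η : ℝ) (hα : 0 ≤ α) (h : xp = x + α • (z - xp) - η • g) :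
    (1 + α) * ‖xp - s‖ ^ 2 ≤ ‖x - s‖ ^ 2 + α * ‖z - s‖ ^ 2 + η ^ 2 * ‖g‖ ^ 2
      - 2 * η * (⟪g, x⟫ - ⟪g, s⟫) := by
  obtain ⟨u, hu⟩ : ∃ u, u = xp - s := ⟨_, rfl⟩
  obtain ⟨v, hv⟩ : ∃ v, v = xp - z := ⟨_, rfl⟩
  have e1 : x - s = u + α • v + η • g := by
    have : x = xp - α • (z - xp) + η • g := by
      nth_rewrite 1 [h]; abel
    rw [this, hu, hv]; module
  have e2 : z - s = u - v := by rw [hu, hv]; abel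
  rw [← inner_sub_right, e1, e2, ← hu]
  simp only [← real_inner_self_eq_norm_sq, inner_add_left, inner_add_right, inner_sub_left,
    inner_sub_right, real_inner_smul_left, real_inner_smul_right]
  rw [real_inner_comm u v, real_inner_comm u g, real_inner_comm v g]
  have := mul_nonneg (add_nonneg (sq_nonneg α) hα) (real_inner_self_nonneg (x := v))
  nlinarith

lemma bam_inner_aux {E : Type*} [NormedAddCommGroup E] [InnerProductSpace ℝ E]
    (h d : E) (c : ℝ) (hc : 0 < c) (hi : ‖h + c⁻¹ • d‖ ≤ c⁻¹ * ‖d‖) :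
    c * ‖h‖ ^ 2 + 2 * ⟪h, d⟫ ≤ 0 := by
  have h1 : ‖h + c⁻¹ • d‖ ^ 2 ≤ (c⁻¹ * ‖d‖) ^ 2 := pow_le_pow_left₀ (norm_nonneg _) hi 2
  rw [norm_add_sq_real, norm_smul, real_inner_smul_right, Real.norm_of_nonneg (inv_pos.2 hc).le] at h1
  have h2 : c * (‖h‖ ^ 2 + 2 * (c⁻¹ * ⟪h, d⟫)) ≤ 0 :=
    mul_nonpos_of_nonneg_of_nonpos hc.le (by linarith)
  have h3 : c * (‖h‖ ^ 2 + 2 * (c⁻¹ * ⟪h, d⟫)) = c * ‖h‖ ^ 2 + 2 * ⟪h, d⟫ := by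
    field_simp
  linarith

theorem bam_epsilon_complexity
    {Ex Ey : Type*} [NormedAddCommGroup Ex] [InnerProductSpace ℝ Ex]
    [NormedAddCommGroup Ey] [InnerProductSpace ℝ Ey]
    (f : Ex → Ey → ℝ) (gx : Ex → Ey → Ex) (gy : Ex → Ey → Ey)
    (Lx Ly μx μy : ℝ) (hμx : 0 < μx) (hμy : 0 < μy) (hμLx : μx ≤ Lx) (hμLy : μy ≤ Ly)
    (hsmooth : ∀ x₁ x₂ : Ex, ∀ y₁ y₂ : Ey,
      f x₂ y₂ ≤ f x₁ y₁ + ⟪gx x₁ y₁, x₂ - x₁⟫ + ⟪gy x₁ y₁, y₂ - y₁⟫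
        + Lx / 2 * ‖x₂ - x₁‖ ^ 2 + Ly / 2 * ‖y₂ - y₁‖ ^ 2)
    (hsc : ∀ x₁ x₂ : Ex, ∀ y₁ y₂ : Ey,
      f x₂ y₂ ≥ f x₁ y₁ + ⟪gx x₁ y₁, x₂ - x₁⟫ + ⟪gy x₁ y₁, y₂ - y₁⟫
        + μx / 2 * ‖x₂ - x₁‖ ^ 2 + μy / 2 * ‖y₂ - y₁‖ ^ 2)
    (xs : Ex) (ys : Ey) (hmin : ∀ x y, f xs ys ≤ f x y)
    (α ηx ηy : ℝ)
    (hα : α = Real.sqrt (μx / Lx))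
    (hηx : ηx = 1 / Real.sqrt (μx * Lx))
    (hηy : ηy = (1 / μy) * Real.sqrt (μx / Lx))
    (K : ℕ)
    (x xb : ℕ → Ex) (y yb : ℕ → Ey)
    (xu : ℕ → Ex) (yu : ℕ → Ey)
    (hx0 : x 0 = xb 0) (hy0 : y 0 = yb 0)
    (hxu : ∀ k < K, xu k = α • x k + (1 - α) • xb k)
    (hyu : ∀ k < K, yu k = α • y k + (1 - α) • yb k)
    (hinner : ∀ k < K,
      ‖gy (xu k) (yb (k + 1)) + (ηy * α)⁻¹ • (yb (k + 1) - yu k)‖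
        ≤ (ηy * α)⁻¹ * ‖yb (k + 1) - yu k‖)
    (hxb : ∀ k < K, xb (k + 1) = xu k - (ηx * α) • gx (xu k) (yb (k + 1)))
    (hx : ∀ k < K, x (k + 1) = x k + α • (xu k - x (k + 1)) - ηx • gx (xu k) (yb (k + 1)))
    (hy : ∀ k < K, y (k + 1) = y k + α • (yb (k + 1) - y (k + 1)) - ηy • gy (xu k) (yb (k + 1)))
    (Ψ0 : ℝ)
    (hΨ0 : Ψ0 =
      (1 + α) * (ηx⁻¹ * ‖x 0 - xs‖ ^ 2 + ηy⁻¹ * ‖y 0 - ys‖ ^ 2)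
        + (2 / α) * (f (xb 0) (yb 0) - f xs ys))
    (ε : ℝ) (hε : 0 < ε)
    (hK : (K : ℝ) ≥ 2 * Real.sqrt (Lx / μx) * Real.log (max 1 (α * Ψ0 / (2 * ε)))) :
    f (xb K) (yb K) - f xs ys ≤ ε := by
  have hLx : 0 < Lx := hμx.trans_le hμLx
  have hα0 : 0 < α := by rw [hα]; positivity
  have hα1 : α ≤ 1 := by
    rw [hα, Real.sqrt_le_iff]
    exact ⟨zero_le_one, by rw [one_pow]; exact (div_le_one hLx).2 hμLx⟩
  have hαsq : α ^ 2 * Lx = μx := by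
    rw [hα, Real.sq_sqrt (by positivity)]; field_simp
  have hηx0 : 0 < ηx := by rw [hηx]; positivity
  have hηy0 : 0 < ηy := by rw [hηy]; positivity
  have hsq : Real.sqrt (μx * Lx) = α * Lx := by
    rw [← hαsq, show α ^ 2 * Lx * Lx = (α * Lx) ^ 2 by ring, Real.sqrt_sq (by positivity)]
  have hηx' : ηx * (α * Lx) = 1 := by rw [hηx, hsq]; field_simp
  have hηxμ : ηx⁻¹ * α = μx := by
    rw [inv_eq_of_mul_eq_one_right hηx', ← hαsq]; ring
  have hηyμ : ηy⁻¹ * α = μy := by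
    rw [hηy, ← hα]; field_simp
  have hsq2 : Real.sqrt (Lx / μx) = α⁻¹ := by
    rw [hα, ← Real.sqrt_inv, inv_div]
  obtain ⟨D, hD⟩ : ∃ D : ℕ → ℝ, ∀ k, D k = ηx⁻¹ * ‖x k - xs‖ ^ 2 + ηy⁻¹ * ‖y k - ys‖ ^ 2 :=
    ⟨_, fun _ => rfl⟩
  obtain ⟨F, hF⟩ : ∃ F : ℕ → ℝ, ∀ k, F k = f (xb k) (yb k) - f xs ys := ⟨_, fun _ => rfl⟩
  have hF0 : ∀ k, 0 ≤ F k := fun k => by rw [hF]; linarith [hmin (xb k) (yb k)]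
  have hD0 : ∀ k, 0 ≤ D k := fun k => by rw [hD]; positivity
  have step : ∀ k < K, (1 + α) * D (k + 1) + 2 / α * F (k + 1) ≤ D k + (1 - α) * (2 / α * F k) := by
    intro k hk
    have ax := bam_aux (x k) (x (k + 1)) (xu k) _ xs α ηx hα0.le (hx k hk)
    have ay := bam_aux (y k) (y (k + 1)) (yb (k + 1)) _ ys α ηy hα0.le (hy k hk)
    have ai := bam_inner_aux _ _ (ηy * α) (by positivity) (hinner k hk)
    have c1 := hsc (xu k) (xb k) (yb (k + 1)) (yb k)
    have c2 := hsc (xu k) xs (yb (k + 1)) ys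
    have sm := hsmooth (xu k) (xb (k + 1)) (yb (k + 1)) (yb (k + 1))
    rw [hxb k hk] at sm
    rw [norm_sub_rev xs, norm_sub_rev ys] at c2
    have hb : f (xu k - (ηx * α) • gx (xu k) (yb (k + 1))) (yb (k + 1)) = F (k + 1) + f xs ys := by
      rw [hF, ← hxb k hk]; ring
    have hb0 : f (xb k) (yb k) = F k + f xs ys := by rw [hF]; ring
    rw [hb] at sm
    rw [hb0] at c1
    have ex : ⟪gx (xu k) (yb (k + 1)), xu k⟫ = α * ⟪gx (xu k) (yb (k + 1)), x k⟫
        + (1 - α) * ⟪gx (xu k) (yb (k + 1)), xb k⟫ := by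
      generalize gx (xu k) (yb (k + 1)) = g
      rw [hxu k hk, inner_add_right, real_inner_smul_right, real_inner_smul_right]
    have ey : ⟪gy (xu k) (yb (k + 1)), yu k⟫ = α * ⟪gy (xu k) (yb (k + 1)), y k⟫
        + (1 - α) * ⟪gy (xu k) (yb (k + 1)), yb k⟫ := by
      rw [hyu k hk, inner_add_right, real_inner_smul_right, real_inner_smul_right]
    rw [hD, hD]
    generalize gx (xu k) (yb (k + 1)) = g at *
    generalize gy (xu k) (yb (k + 1)) = h at *
    have esub : xu k - (ηx * α) • g - xu k = -((ηx * α) • g) := by abel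
    rw [esub] at sm
    simp only [sub_self, inner_zero_right, norm_zero, inner_neg_right, norm_neg, norm_smul,
      real_inner_smul_right, real_inner_self_eq_norm_sq, mul_pow, Real.norm_eq_abs, sq_abs] at sm
    have sm' : α * ηx * ‖g‖ ^ 2 ≤ 2 * (f (xu k) (yb (k + 1)) - (F (k + 1) + f xs ys)) := by
      have : Lx / 2 * ((ηx ^ 2 * α ^ 2) * ‖g‖ ^ 2) = ηx * α * ‖g‖ ^ 2 / 2 := by
        linear_combination (ηx * α * ‖g‖ ^ 2 / 2) * hηx'
      linarith
    simp only [inner_sub_right] at c1 c2 ai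
    have c1' : (1 - α) * (⟪g, xb k⟫ - ⟪g, xu k⟫ + (⟪h, yb k⟫ - ⟪h, yb (k + 1)⟫))
        ≤ (1 - α) * (F k + f xs ys - f (xu k) (yb (k + 1))) := by
      apply mul_le_mul_of_nonneg_left _ (by linarith)
      have : 0 ≤ μx / 2 * ‖xb k - xu k‖ ^ 2 := by positivity
      have : 0 ≤ μy / 2 * ‖yb k - yb (k + 1)‖ ^ 2 := by positivity
      linarith
    have ax' := mul_le_mul_of_nonneg_left ax (inv_pos.2 hηx0).le
    have ay' := mul_le_mul_of_nonneg_left ay (inv_pos.2 hηy0).le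
    have rx : ηx⁻¹ * (‖x k - xs‖ ^ 2 + α * ‖xu k - xs‖ ^ 2 + ηx ^ 2 * ‖g‖ ^ 2
        - 2 * ηx * (⟪g, x k⟫ - ⟪g, xs⟫)) = ηx⁻¹ * ‖x k - xs‖ ^ 2 + μx * ‖xu k - xs‖ ^ 2
        + ηx * ‖g‖ ^ 2 - 2 * (⟪g, x k⟫ - ⟪g, xs⟫) := by
      rw [← hηxμ]; field_simp
    have ry : ηy⁻¹ * (‖y k - ys‖ ^ 2 + α * ‖yb (k + 1) - ys‖ ^ 2 + ηy ^ 2 * ‖h‖ ^ 2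
        - 2 * ηy * (⟪h, y k⟫ - ⟪h, ys⟫)) = ηy⁻¹ * ‖y k - ys‖ ^ 2 + μy * ‖yb (k + 1) - ys‖ ^ 2
        + ηy * ‖h‖ ^ 2 - 2 * (⟪h, y k⟫ - ⟪h, ys⟫) := by
      rw [← hηyμ]; field_simp
    rw [rx] at ax'
    rw [ry] at ay'
    have c2' := mul_le_mul_of_nonneg_left c2 hα0.le
    have ax2 := mul_le_mul_of_nonneg_left ax' hα0.le
    have ay2 := mul_le_mul_of_nonneg_left ay' hα0.le
    have eF : ∀ t : ℝ, α * (2 / α * t) = 2 * t := fun t => by field_simp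
    refine le_of_mul_le_mul_left ?_ hα0
    have e1 := eF (F (k + 1))
    have e2 := eF (F k)
    linear_combination ax2 + ay2 + 2 * c2' + 2 * c1' + sm' + ai + e1 - (1 - α) * e2 + 2 * ex + 2 * ey
  have main : ∀ k ≤ K, (1 + α) ^ k * ((1 + α) * D k + 2 / α * F k) ≤ Ψ0 := by
    intro k
    induction k with
    | zero => intro _; rw [hΨ0, hD, hF]; simp
    | succ k ih =>
      intro hk
      refine le_trans ?_ (ih (by omega))
      rw [pow_succ, mul_assoc]
      apply mul_le_mul_of_nonneg_left _ (by positivity)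
      have h1 := mul_le_mul_of_nonneg_left (step k (by omega)) (show 0 ≤ 1 + α by linarith)
      have h2 : 0 ≤ α ^ 2 * (2 / α * F k) := by have := hF0 k; positivity
      linarith
  have hm := main K le_rfl
  have hexp : Real.exp (α / 2) ≤ 1 + α := by
    have h1 := Real.one_sub_le_exp_neg (α / 2)
    rw [Real.exp_neg] at h1
    have h2 : Real.exp (α / 2) * (1 - α / 2) ≤ 1 := by
      have := mul_le_mul_of_nonneg_left h1 (Real.exp_pos (α / 2)).le
      rwa [mul_inv_cancel₀ (Real.exp_pos _).ne'] at this
    have h3 : 1 ≤ (1 + α) * (1 - α / 2) := by nlinarith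
    exact le_of_mul_le_mul_right (h2.trans h3) (by linarith)
  have hmax : α * Ψ0 / (2 * ε) ≤ (1 + α) ^ K := by
    rw [hsq2] at hK
    have hp : (0 : ℝ) < max 1 (α * Ψ0 / (2 * ε)) := lt_of_lt_of_le one_pos (le_max_left _ _)
    have hl : Real.log (max 1 (α * Ψ0 / (2 * ε))) ≤ K * (α / 2) := by
      have := mul_le_mul_of_nonneg_right hK (show 0 ≤ α / 2 by linarith)
      have e : 2 * α⁻¹ * Real.log (max 1 (α * Ψ0 / (2 * ε))) * (α / 2)
        = Real.log (max 1 (α * Ψ0 / (2 * ε))) := by field_simp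
      linarith
    calc α * Ψ0 / (2 * ε) ≤ max 1 (α * Ψ0 / (2 * ε)) := le_max_right _ _
      _ ≤ Real.exp (K * (α / 2)) := (Real.log_le_iff_le_exp hp).1 hl
      _ = Real.exp (α / 2) ^ K := Real.exp_nat_mul _ _
      _ ≤ (1 + α) ^ K := pow_le_pow_left₀ (Real.exp_pos _).le hexp K
  rw [div_le_iff₀ (by positivity)] at hmax
  rw [← hF]
  have hP : (0 : ℝ) < (1 + α) ^ K := by positivity
  have h1 : (1 + α) ^ K * (2 / α * F K) ≤ Ψ0 := by
    refine le_trans (mul_le_mul_of_nonneg_left ?_ hP.le) hm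
    have := mul_nonneg (show 0 ≤ 1 + α by linarith) (hD0 K)
    linarith
  have h2 := mul_le_mul_of_nonneg_left h1 hα0.le
  have h3 : α * ((1 + α) ^ K * (2 / α * F K)) = (1 + α) ^ K * (2 * F K) := by field_simp
  have h4 := le_of_mul_le_mul_left (h3 ▸ h2.trans hmax) hP
  linarith
end

section
/- Let f : E_x × E_y → ℝ be (L_x, L_y)-smooth and (μ_x, μ_y)-strongly convex with 0 < μ_x ≤ L_x and 0 < μ_y ≤ L_y, and let (x*, y*) be a global minimizer of f. Set α = √(μ_x/L_x), η_x = 1/√(μ_x·L_x), η_y = (1/μ_y)·√(μ_x/L_x). Let the sequences (x^k, y^k, x̄^k, ȳ^k)_{k=0}^{K} satisfy the BAM recurrences: x^0 = x̄^0, y^0 = ȳ^0, and for every k < K, with x̲^k = α·x^k + (1−α)·x̄^k and y̲^k = α·y^k + (1−α)·ȳ^k: ‖∇_y f(x̲^k, ȳ^{k+1}) + (η_y·α)⁻¹·(ȳ^{k+1} − y̲^k)‖ ≤ (η_y·α)⁻¹·‖ȳ^{k+1} − y̲^k‖, x̄^{k+1} = x̲^k − η_x·α·∇_x f(x̲^k,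 ȳ^{k+1}), x^{k+1} = x^k + α·(x̲^k − x^{k+1}) − η_x·∇_x f(x̲^k, ȳ^{k+1}), y^{k+1} = y^k + α·(ȳ^{k+1} − y^{k+1}) − η_y·∇_y f(x̲^k, ȳ^{k+1}). Define Ψ^0 = (1+α)·(η_x⁻¹·‖x^0 − x*‖² + η_y⁻¹·‖y^0 − y*‖²) + (2/α)·(f(x̄^0, ȳ^0) − f(x*, y*)). Then the iterates converge linearly to the minimizer: ‖x^K − x*‖² ≤ η_x·(1+α)^{−(K+1)}·Ψ^0 and ‖y^K − y*‖² ≤ η_y·(1+α)^{−(K+1)}·Ψ^0. -/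
open RealInnerProductSpace

theorem bam_prox {E : Type*} [NormedAddCommGroup E] [InnerProductSpace ℝ E]
    (α η : ℝ) (hα : 0 < α) (hη : 0 < η) (z z' w g s : E)
    (h : z' = z + α • (w - z') - η • g) :
    (1 + α) * (η⁻¹ * ‖z' - s‖ ^ 2) ≤
      η⁻¹ * ‖z - s‖ ^ 2 + α * η⁻¹ * ‖w - s‖ ^ 2 - 2 * ⟪g, z - s⟫ + η * ‖g‖ ^ 2 := by
  have h1 : (1 + α) • (z' - s) = ((z - s) - η • g) + α • (w - s) := by
    have : (1 + α) • z' = z + α • w - η • g := by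
      have h2 : z' + α • z' = (z + α • (w - z') - η • g) + α • z' := by
        rw [← h]
      rw [add_smul, one_smul, h2]; module
    rw [smul_sub, this]; module
  set p := (z - s) - η • g with hp
  have h2 : ‖(1 + α) • (z' - s)‖ ^ 2 = ‖p‖ ^ 2 + 2 * (α * ⟪p, w - s⟫) + α ^ 2 * ‖w - s‖ ^ 2 := by
    rw [h1, norm_add_sq_real, real_inner_smul_right, norm_smul, mul_pow, Real.norm_eq_abs, sq_abs]
  rw [norm_smul, mul_pow, Real.norm_eq_abs, sq_abs] at h2
  have h3 : ‖p‖ ^ 2 = ‖z - s‖ ^ 2 - 2 * (η * ⟪g, z - s⟫) + η ^ 2 * ‖g‖ ^ 2 := by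
    rw [hp, norm_sub_sq_real, real_inner_smul_right, norm_smul, mul_pow, Real.norm_eq_abs, sq_abs,
      real_inner_comm]
  have h4 : 0 ≤ ‖p‖ ^ 2 - 2 * ⟪p, w - s⟫ + ‖w - s‖ ^ 2 := by
    rw [← norm_sub_sq_real]; positivity
  have h5 : (1 + α) * ‖z' - s‖ ^ 2 ≤ ‖p‖ ^ 2 + α * ‖w - s‖ ^ 2 := by
    have : (1 + α) * ((1 + α) * ‖z' - s‖ ^ 2) ≤ (1 + α) * (‖p‖ ^ 2 + α * ‖w - s‖ ^ 2) := by
      nlinarith [mul_nonneg hα.le h4]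
    exact le_of_mul_le_mul_left this (by linarith)
  rw [h3] at h5
  have h6 := mul_le_mul_of_nonneg_left h5 (inv_pos.2 hη).le
  have e : η⁻¹ * η = 1 := inv_mul_cancel₀ hη.ne'
  calc _ = η⁻¹ * ((1 + α) * ‖z' - s‖ ^ 2) := by ring
    _ ≤ _ := h6
    _ = η⁻¹ * ‖z - s‖ ^ 2 + α * η⁻¹ * ‖w - s‖ ^ 2 - 2 * (η⁻¹ * η) * ⟪g, z - s⟫
        + (η⁻¹ * η) * η * ‖g‖ ^ 2 := by ring
    _ = _ := by rw [e]; ring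

set_option maxHeartbeats 2000000 in
theorem bam_iterate_linear_convergence
    {Ex Ey : Type*} [NormedAddCommGroup Ex] [InnerProductSpace ℝ Ex]
    [NormedAddCommGroup Ey] [InnerProductSpace ℝ Ey]
    (f : Ex → Ey → ℝ) (gx : Ex → Ey → Ex) (gy : Ex → Ey → Ey)
    (Lx Ly μx μy : ℝ) (hμx : 0 < μx) (hμy : 0 < μy) (hμLx : μx ≤ Lx) (hμLy : μy ≤ Ly)
    (hsmooth : ∀ x₁ x₂ : Ex, ∀ y₁ y₂ : Ey,
      f x₂ y₂ ≤ f x₁ y₁ + ⟪gx x₁ y₁, x₂ - x₁⟫ + ⟪gy x₁ y₁, y₂ - y₁⟫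
        + Lx / 2 * ‖x₂ - x₁‖ ^ 2 + Ly / 2 * ‖y₂ - y₁‖ ^ 2)
    (hsc : ∀ x₁ x₂ : Ex, ∀ y₁ y₂ : Ey,
      f x₂ y₂ ≥ f x₁ y₁ + ⟪gx x₁ y₁, x₂ - x₁⟫ + ⟪gy x₁ y₁, y₂ - y₁⟫
        + μx / 2 * ‖x₂ - x₁‖ ^ 2 + μy / 2 * ‖y₂ - y₁‖ ^ 2)
    (xs : Ex) (ys : Ey) (hmin : ∀ x y, f xs ys ≤ f x y)
    (α ηx ηy : ℝ)
    (hα : α = Real.sqrt (μx / Lx))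
    (hηx : ηx = 1 / Real.sqrt (μx * Lx))
    (hηy : ηy = (1 / μy) * Real.sqrt (μx / Lx))
    (K : ℕ)
    (x xb : ℕ → Ex) (y yb : ℕ → Ey)
    (xu : ℕ → Ex) (yu : ℕ → Ey)
    (hx0 : x 0 = xb 0) (hy0 : y 0 = yb 0)
    (hxu : ∀ k < K, xu k = α • x k + (1 - α) • xb k)
    (hyu : ∀ k < K, yu k = α • y k + (1 - α) • yb k)
    (hinner : ∀ k < K,
      ‖gy (xu k) (yb (k + 1)) + (ηy * α)⁻¹ • (yb (k + 1) - yu k)‖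
        ≤ (ηy * α)⁻¹ * ‖yb (k + 1) - yu k‖)
    (hxb : ∀ k < K, xb (k + 1) = xu k - (ηx * α) • gx (xu k) (yb (k + 1)))
    (hx : ∀ k < K, x (k + 1) = x k + α • (xu k - x (k + 1)) - ηx • gx (xu k) (yb (k + 1)))
    (hy : ∀ k < K, y (k + 1) = y k + α • (yb (k + 1) - y (k + 1)) - ηy • gy (xu k) (yb (k + 1)))
    (Ψ0 : ℝ)
    (hΨ0 : Ψ0 =
      (1 + α) * (ηx⁻¹ * ‖x 0 - xs‖ ^ 2 + ηy⁻¹ * ‖y 0 - ys‖ ^ 2)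
        + (2 / α) * (f (xb 0) (yb 0) - f xs ys))
    :
    ‖x K - xs‖ ^ 2 ≤ ηx * ((1 + α) ^ (K + 1))⁻¹ * Ψ0 ∧
      ‖y K - ys‖ ^ 2 ≤ ηy * ((1 + α) ^ (K + 1))⁻¹ * Ψ0 := by
  have hLx : 0 < Lx := lt_of_lt_of_le hμx hμLx
  have hα0 : 0 < α := by rw [hα]; positivity
  have hηx0 : 0 < ηx := by rw [hηx]; positivity
  have hηy0 : 0 < ηy := by rw [hηy]; positivity
  have hα2 : α ^ 2 = μx / Lx := by rw [hα]; exact Real.sq_sqrt (by positivity)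
  have hα1 : α ≤ 1 := by
    rw [hα]; exact Real.sqrt_le_one.2 ((div_le_one hLx).2 hμLx)
  have hsq : Real.sqrt (μx * Lx) = α * Lx := by
    rw [Real.sqrt_eq_iff_mul_self_eq (by positivity) (by positivity)]
    have : α * Lx * (α * Lx) = α ^ 2 * Lx ^ 2 := by ring
    rw [this, hα2]; field_simp
  have hηxi : ηx⁻¹ = α * Lx := by rw [hηx, hsq]; simp
  have hμx' : α * ηx⁻¹ = μx := by
    rw [hηxi]
    have : α * (α * Lx) = α ^ 2 * Lx := by ring
    rw [this, hα2]; field_simp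
  have hηxα : ηx * α = 1 / Lx := by
    rw [hηx, hsq]; field_simp
  have hμy' : α * ηy⁻¹ = μy := by
    rw [hηy, ← hα]; field_simp
  have hstep : ∀ k < K,
      (1 + α) * ((1 + α) * (ηx⁻¹ * ‖x (k+1) - xs‖ ^ 2 + ηy⁻¹ * ‖y (k+1) - ys‖ ^ 2)
        + (2 / α) * (f (xb (k+1)) (yb (k+1)) - f xs ys)) ≤
      (1 + α) * (ηx⁻¹ * ‖x k - xs‖ ^ 2 + ηy⁻¹ * ‖y k - ys‖ ^ 2)
        + (2 / α) * (f (xb k) (yb k) - f xs ys) := by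
    intro k hk
    have px := bam_prox α ηx hα0 hηx0 (x k) (x (k+1)) (xu k) _ xs (hx k hk)
    have py := bam_prox α ηy hα0 hηy0 (y k) (y (k+1)) (yb (k+1)) _ ys (hy k hk)
    have hin := hinner k hk
    have hxbk := hxb k hk
    have sc1 := hsc (xu k) xs (yb (k+1)) ys
    have sc2 := hsc (xu k) (xb k) (yb (k+1)) (yb k)
    have sm := hsmooth (xu k) (xb (k+1)) (yb (k+1)) (yb (k+1))
    set g := gx (xu k) (yb (k+1)) with hg
    set h := gy (xu k) (yb (k+1)) with hh
    -- descent
    have hd : xb (k+1) - xu k = -((ηx * α) • g) := by rw [hxbk]; abel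
    rw [hd, sub_self, inner_zero_right, inner_neg_right, real_inner_smul_right,
      real_inner_self_eq_norm_sq, norm_neg, norm_smul, mul_pow, Real.norm_eq_abs, sq_abs,
      norm_zero] at sm
    have sm' : α * (ηx * ‖g‖ ^ 2) ≤ 2 * (f (xu k) (yb (k+1)) - f (xb (k+1)) (yb (k+1))) := by
      have e : Lx / 2 * ((ηx * α) ^ 2 * ‖g‖ ^ 2) = (ηx * α) * ‖g‖ ^ 2 / 2 := by
        rw [hηxα]; field_simp
      rw [e] at sm
      nlinarith [sm]
    -- inner condition
    have hc : 0 < ηy * α := mul_pos hηy0 hα0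
    have hin2 : α * (ηy * ‖h‖ ^ 2) + 2 * ⟪h, yb (k+1) - yu k⟫ ≤ 0 := by
      have q := pow_le_pow_left₀ (norm_nonneg _) hin 2
      rw [norm_add_sq_real, real_inner_smul_right, norm_smul, mul_pow, mul_pow, Real.norm_eq_abs,
        sq_abs] at q
      have q2 : ‖h‖ ^ 2 + 2 * ((ηy * α)⁻¹ * ⟪h, yb (k+1) - yu k⟫) ≤ 0 := by linarith
      have q3 := mul_le_mul_of_nonneg_left q2 hc.le
      have e : (ηy * α) * (ηy * α)⁻¹ = 1 := mul_inv_cancel₀ hc.ne'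
      have e2 : (ηy * α) * (‖h‖ ^ 2 + 2 * ((ηy * α)⁻¹ * ⟪h, yb (k+1) - yu k⟫))
        = α * (ηy * ‖h‖ ^ 2) + 2 * ((ηy * α) * (ηy * α)⁻¹) * ⟪h, yb (k+1) - yu k⟫ := by ring
      rw [e2, e] at q3
      linarith
    rw [hμx'] at px
    rw [hμy'] at py
    have hm1 := hmin (xb k) (yb k)
    have n1 : 0 ≤ μx / 2 * ‖xb k - xu k‖ ^ 2 := by positivity
    have n2 : 0 ≤ μy / 2 * ‖yb k - yb (k+1)‖ ^ 2 := by positivity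
    rw [norm_sub_rev xs, norm_sub_rev ys] at sc1
    have ixu : ⟪g, xu k⟫ = α * ⟪g, x k⟫ + (1 - α) * ⟪g, xb k⟫ := by
      rw [hxu k hk, inner_add_right, real_inner_smul_right, real_inner_smul_right]
    have iyu : ⟪h, yu k⟫ = α * ⟪h, y k⟫ + (1 - α) * ⟪h, yb k⟫ := by
      rw [hyu k hk, inner_add_right, real_inner_smul_right, real_inner_smul_right]
    simp only [inner_sub_right] at px py sc1 sc2 hin2
    have c2 : (1 - α) * (⟪g, xb k⟫ - ⟪g, xu k⟫ + (⟪h, yb k⟫ - ⟪h, yb (k+1)⟫)) ≤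
        (1 - α) * (f (xb k) (yb k) - f (xu k) (yb (k+1))) :=
      mul_le_mul_of_nonneg_left (by linarith) (by linarith)
    have P := mul_le_mul_of_nonneg_left (add_le_add px py) hα0.le
    have S := mul_le_mul_of_nonneg_left sc1 hα0.le
    have main : α * ((1 + α) * (ηx⁻¹ * ‖x (k+1) - xs‖ ^ 2 + ηy⁻¹ * ‖y (k+1) - ys‖ ^ 2))
        + 2 * (f (xb (k+1)) (yb (k+1)) - f xs ys) ≤
        α * (ηx⁻¹ * ‖x k - xs‖ ^ 2 + ηy⁻¹ * ‖y k - ys‖ ^ 2)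
        + 2 * (1 - α) * (f (xb k) (yb k) - f xs ys) := by
      linarith
    have main2 := mul_le_mul_of_nonneg_left main (by linarith : 0 ≤ 1 + α)
    have n3 : 0 ≤ α ^ 2 * (f (xb k) (yb k) - f xs ys) := mul_nonneg (by positivity) (by linarith)
    refine le_of_mul_le_mul_left ?_ hα0
    have e : ∀ A B t : ℝ, α * (A + 2 / α * t) = α * A + 2 * t := by
      intro A B t; field_simp
    rw [mul_left_comm, e _ 0, e _ 0]
    linarith
  have hΨ : ∀ k ≤ K, (1 + α) ^ k *
      ((1 + α) * (ηx⁻¹ * ‖x k - xs‖ ^ 2 + ηy⁻¹ * ‖y k - ys‖ ^ 2)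
        + (2 / α) * (f (xb k) (yb k) - f xs ys)) ≤ Ψ0 := by
    intro k
    induction k with
    | zero => intro _; rw [hΨ0]; simp
    | succ k ih =>
      intro hk
      refine le_trans ?_ (ih (by omega))
      rw [pow_succ, mul_assoc]
      exact mul_le_mul_of_nonneg_left (hstep k (by omega)) (by positivity)
  have hK := hΨ K le_rfl
  have hf : 0 ≤ (2 / α) * (f (xb K) (yb K) - f xs ys) :=
    mul_nonneg (by positivity) (by linarith [hmin (xb K) (yb K)])
  have hp : 0 < (1 + α) ^ K := by positivity
  have hA : (1 + α) ^ (K + 1) * (ηx⁻¹ * ‖x K - xs‖ ^ 2 + ηy⁻¹ * ‖y K - ys‖ ^ 2) ≤ Ψ0 := by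
    rw [pow_succ]
    nlinarith [mul_nonneg hp.le hf]
  have hq : 0 < (1 + α) ^ (K + 1) := by positivity
  have hB : ηx⁻¹ * ‖x K - xs‖ ^ 2 + ηy⁻¹ * ‖y K - ys‖ ^ 2 ≤ ((1 + α) ^ (K + 1))⁻¹ * Ψ0 := by
    exact (le_inv_mul_iff₀ hq).2 hA
  have hX : 0 ≤ ηx⁻¹ * ‖x K - xs‖ ^ 2 := by positivity
  have hY : 0 ≤ ηy⁻¹ * ‖y K - ys‖ ^ 2 := by positivity
  constructor
  · rw [mul_assoc, ← inv_mul_le_iff₀ hηx0]; linarith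
  · rw [mul_assoc, ← inv_mul_le_iff₀ hηy0]; linarith
end
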